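/- arXiv:1606.09141 — 2 statements merged into one kernel-verified Lean document; each statement's English description precedes it below -/
import Mathlib

section
/- Minimal quintic cones in ℝ^{4n+2}: let n ≥ 1, and on ℝ^{4n+2} (coordinates x₁,y₁,…,x_{2n+1},y_{2n+1}) set T₁ = Σ_{j=1}^{n}(xⱼ² − yⱼ²), T₂ = Σ_{j=1}^{n} 2xⱼyⱼ, S₁ = Σ_{j=n+1}^{2n}(xⱼ² − yⱼ²), S₂ = Σ_{j=n+1}^{2n} 2xⱼyⱼ. The quintic polynomial P = y_{2n+1}·(T₁S₁ − T₂S₂) − x_{2n+1}·(T₂S₁ + T₁S₂) satisfies ‖∇P‖²·ΔP − Δ_∞P = 0 at every point of {P = 0} where ∇P ≠ 0; hence {y_{2n+1}(T₁S₁ − T₂S₂) = x_{2n+1}(T₂S₁ + T₁S₂)} is a minimal quintic cone in ℝ^{4n+2}. -/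
noncomputable section

variable {ι : Type*} [Fintype ι] [DecidableEq ι]

/-- The `i`-th partial derivative `∂F/∂zᵢ` of `F : ℝ^ι → ℝ` at `x`. -/
def pd (F : EuclideanSpace ℝ ι → ℝ) (x : EuclideanSpace ℝ ι) (i : ι) : ℝ :=
  fderiv ℝ F x (EuclideanSpace.single i 1)

/-- The Laplacian `ΔF = Σᵢ ∂²F/∂zᵢ²` at `x`. -/
def lap (F : EuclideanSpace ℝ ι → ℝ) (x : EuclideanSpace ℝ ι) : ℝ :=
  ∑ i, fderiv ℝ (fun y => pd F y i) x (EuclideanSpace.single i 1)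

/-- The infinity-Laplacian `Δ_∞F = Σ_{i,j} (∂F/∂zᵢ)(∂F/∂zⱼ)(∂²F/∂zᵢ∂zⱼ)` at `x`. -/
def infLap (F : EuclideanSpace ℝ ι → ℝ) (x : EuclideanSpace ℝ ι) : ℝ :=
  ∑ i, ∑ j, pd F x i * pd F x j * fderiv ℝ (fun y => pd F y i) x (EuclideanSpace.single j 1)

/-- The squared norm `‖∇F‖²` of the gradient of `F` at `x`. -/
def gradSq (F : EuclideanSpace ℝ ι → ℝ) (x : EuclideanSpace ℝ ι) : ℝ :=
  ∑ i, (pd F x i) ^ 2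

/-- `T₁ = Σ_{j=1}^{n} (xⱼ² − yⱼ²)` on `ℝ^{4n+2}`, with `xⱼ = z (inl j)`, `yⱼ = z (inr j)`,
indices `j = 0,…,2n` in `Fin (2n+1)`. -/
def T1 (n : ℕ) (z : EuclideanSpace ℝ (Fin (2 * n + 1) ⊕ Fin (2 * n + 1))) : ℝ :=
  ∑ j : Fin n, ((z (Sum.inl ⟨j.1, by omega⟩)) ^ 2 - (z (Sum.inr ⟨j.1, by omega⟩)) ^ 2)

/-- `T₂ = Σ_{j=1}^{n} 2xⱼyⱼ` on `ℝ^{4n+2}`. -/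
def T2 (n : ℕ) (z : EuclideanSpace ℝ (Fin (2 * n + 1) ⊕ Fin (2 * n + 1))) : ℝ :=
  ∑ j : Fin n, 2 * z (Sum.inl ⟨j.1, by omega⟩) * z (Sum.inr ⟨j.1, by omega⟩)

/-- `S₁ = Σ_{j=n+1}^{2n} (xⱼ² − yⱼ²)` on `ℝ^{4n+2}`. -/
def S1 (n : ℕ) (z : EuclideanSpace ℝ (Fin (2 * n + 1) ⊕ Fin (2 * n + 1))) : ℝ :=
  ∑ j : Fin n, ((z (Sum.inl ⟨n + j.1, by omega⟩)) ^ 2 - (z (Sum.inr ⟨n + j.1, by omega⟩)) ^ 2)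

/-- `S₂ = Σ_{j=n+1}^{2n} 2xⱼyⱼ` on `ℝ^{4n+2}`. -/
def S2 (n : ℕ) (z : EuclideanSpace ℝ (Fin (2 * n + 1) ⊕ Fin (2 * n + 1))) : ℝ :=
  ∑ j : Fin n, 2 * z (Sum.inl ⟨n + j.1, by omega⟩) * z (Sum.inr ⟨n + j.1, by omega⟩)

/-- The quintic `P = y_{2n+1}·(T₁S₁ − T₂S₂) − x_{2n+1}·(T₂S₁ + T₁S₂)`. -/
def QuinticP (n : ℕ) (z : EuclideanSpace ℝ (Fin (2 * n + 1) ⊕ Fin (2 * n + 1))) : ℝ :=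
  z (Sum.inr (Fin.last (2 * n))) * (T1 n z * S1 n z - T2 n z * S2 n z) -
    z (Sum.inl (Fin.last (2 * n))) * (T2 n z * S1 n z + T1 n z * S2 n z)

/-!
With `w = y_{2n+1} + i x_{2n+1}`, `uⱼ = xⱼ + i yⱼ` and `vⱼ = x_{n+j} + i y_{n+j}`, the quintic is
`P = Re f` for the holomorphic function `f = w · ∑ uⱼ² · ∑ vⱼ²`. Hence `ΔP = 0`, and with `∇f` the
vector of the `conj (∂f/∂zₖ)` one has `Δ_∞ P = Re (D²f(∇f, ∇f))`. It remains to see that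
`D²f(∇f, ∇f)` is a real multiple of `conj f`, so that `Δ_∞ P` is a multiple of `P`. This holds for
linear functions (multiple `0`) and for `∑ zₖ²` (multiple `8`), and it passes to a product
`f(z) g(w)` of functions of separate variables: the pure second derivatives contribute the
multiples for `f` and `g` times `|g|²` and `|f|²`, and the mixed ones contribute
`2 ‖∇f‖² ‖∇g‖² conj (f g)`.
-/

open scoped ComplexConjugate Gradient

section NormedSpace

variable {𝕜 E F G : Type*} [NontriviallyNormedField 𝕜]
  [NormedAddCommGroup E] [NormedSpace 𝕜 E] [NormedAddCommGroup F] [NormedSpace 𝕜 F]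
  [NormedAddCommGroup G] [NormedSpace 𝕜 G]

lemma differentiable_fderiv_of_contDiff_two {f : E → F} (hf : ContDiff 𝕜 2 f) :
    Differentiable 𝕜 (fderiv 𝕜 f) :=
  (hf.fderiv_right (m := 1) one_add_one_eq_two.le).differentiable one_ne_zero

lemma fderiv_clm_apply_const {c : E → F →L[𝕜] G} {x : E}
    (hc : DifferentiableAt 𝕜 c x) (v : E) (w : F) :
    fderiv 𝕜 (fun y => c y w) x v = fderiv 𝕜 c x v w := by
  simp [fderiv_clm_apply hc (differentiableAt_const w)]

/-- The product `f(z)·g(w)` of functions of separate variables, on the Hilbert sum. -/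
def extMul (f : E → 𝕜) (g : F → 𝕜) (p : WithLp 2 (E × F)) : 𝕜 := f p.fst * g p.snd

variable {f : E → 𝕜} {g : F → 𝕜}

lemma contDiff_extMul {m : WithTop ℕ∞} (hf : ContDiff 𝕜 m f) (hg : ContDiff 𝕜 m g) :
    ContDiff 𝕜 m (extMul f g) :=
  (hf.comp (WithLp.fstL 2 𝕜 E F).contDiff).mul (hg.comp (WithLp.sndL 2 𝕜 E F).contDiff)

lemma differentiable_extMul (hf : Differentiable 𝕜 f) (hg : Differentiable 𝕜 g) :
    Differentiable 𝕜 (extMul f g) :=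
  (hf.comp (WithLp.fstL 2 𝕜 E F).differentiable).mul
    (hg.comp (WithLp.sndL 2 𝕜 E F).differentiable)

lemma fderiv_extMul_apply (hf : Differentiable 𝕜 f) (hg : Differentiable 𝕜 g)
    (p v : WithLp 2 (E × F)) :
    fderiv 𝕜 (extMul f g) p v =
      fderiv 𝕜 f p.fst v.fst * g p.snd + f p.fst * fderiv 𝕜 g p.snd v.snd := by
  have hf' := (hf p.fst).hasFDerivAt.comp p (WithLp.fstL 2 𝕜 E F).hasFDerivAt
  have hg' := (hg p.snd).hasFDerivAt.comp p (WithLp.sndL 2 𝕜 E F).hasFDerivAt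
  refine (DFunLike.congr_fun (hf'.mul hg').fderiv v).trans ?_
  simp only [Function.comp_apply, add_apply, smul_apply, ContinuousLinearMap.comp_apply,
    WithLp.fstL_apply, WithLp.sndL_apply, smul_eq_mul]
  ring

lemma fderiv_fderiv_extMul_self (hf : ContDiff 𝕜 2 f) (hg : ContDiff 𝕜 2 g)
    (p v : WithLp 2 (E × F)) :
    fderiv 𝕜 (fderiv 𝕜 (extMul f g)) p v v =
      fderiv 𝕜 (fderiv 𝕜 f) p.fst v.fst v.fst * g p.snd
        + 2 * (fderiv 𝕜 f p.fst v.fst * fderiv 𝕜 g p.snd v.snd)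
        + f p.fst * fderiv 𝕜 (fderiv 𝕜 g) p.snd v.snd v.snd := by
  have hf₁ : Differentiable 𝕜 f := hf.differentiable two_ne_zero
  have hg₁ : Differentiable 𝕜 g := hg.differentiable two_ne_zero
  have hf' := differentiable_fderiv_of_contDiff_two hf
  have hg' := differentiable_fderiv_of_contDiff_two hg
  have hf₂ : Differentiable 𝕜 fun z => fderiv 𝕜 f z v.fst :=
    hf'.clm_apply (differentiable_const _)
  have hg₂ : Differentiable 𝕜 fun z => fderiv 𝕜 g z v.snd :=
    hg'.clm_apply (differentiable_const _)
  have first_derivative : (fun q => fderiv 𝕜 (extMul f g) q v) =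
      extMul (fun z => fderiv 𝕜 f z v.fst) g + extMul f (fun z => fderiv 𝕜 g z v.snd) :=
    funext fun q => fderiv_extMul_apply hf₁ hg₁ q v
  rw [← fderiv_clm_apply_const (differentiable_fderiv_of_contDiff_two (contDiff_extMul hf hg) p),
    first_derivative,
    fderiv_add (differentiable_extMul hf₂ hg₁ p) (differentiable_extMul hf₁ hg₂ p), add_apply,
    fderiv_extMul_apply hf₂ hg₁, fderiv_extMul_apply hf₁ hg₂, fderiv_clm_apply_const (hf' _),
    fderiv_clm_apply_const (hg' _)]
  ring

end NormedSpace

lemma fderiv_re_comp {E V : Type*} [NormedAddCommGroup E] [NormedSpace ℝ E]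
    [NormedAddCommGroup V] [NormedSpace ℂ V] (L : E →L[ℝ] V)
    {f : V → ℂ} {x : E} (hf : DifferentiableAt ℂ f (L x)) (v : E) :
    fderiv ℝ (fun y => (f (L y)).re) x v = (fderiv ℂ f (L x) (L v)).re := by
  have h := Complex.reCLM.hasFDerivAt.comp x
    ((hf.hasFDerivAt.restrictScalars ℝ).comp x L.hasFDerivAt)
  exact DFunLike.congr_fun h.fderiv v

section Holomorphic

variable {V : Type*} [NormedAddCommGroup V] [InnerProductSpace ℂ V]

lemma re_inner_map_map {E : Type*} [NormedAddCommGroup E] [InnerProductSpace ℝ E]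
    (L : E →ₗᵢ[ℝ] V) (x y : E) : (inner ℂ (L x) (L y)).re = inner ℝ x y := by
  let := InnerProductSpace.complexToReal (G := V)
  exact L.inner_map_map x y

section RealPart

variable (L : EuclideanSpace ℝ ι ≃ₗᵢ[ℝ] V)

lemma sum_re_inner_smul_map_single (v : V) :
    ∑ i, (inner ℂ (L (EuclideanSpace.single i 1)) v).re • L (EuclideanSpace.single i 1) = v := by
  obtain ⟨x, rfl⟩ := L.surjective v
  have parseval := (EuclideanSpace.basisFun ι ℝ).sum_repr' x
  conv_rhs => rw [← parseval]
  simp only [map_sum, map_smul, EuclideanSpace.basisFun_apply]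
  exact Finset.sum_congr rfl fun i _ => by rw [← re_inner_map_map L.toLinearIsometry]; rfl

lemma sum_bilin_map_single_self_eq_zero (B : V →L[ℂ] V →L[ℂ] ℂ) :
    ∑ i, B (L (EuclideanSpace.single i 1)) (L (EuclideanSpace.single i 1)) = 0 := by
  -- Multiplication by `i` is antisymmetric in the real orthonormal basis `b`, so moving it from
  -- one argument of the trace of `B` to the other changes the sign; bilinearity leaves it as it is.
  set b : ι → V := fun i => L (EuclideanSpace.single i 1)
  set c : ι → ι → ℝ := fun i j => (inner ℂ (b i) (Complex.I • b j)).re with hc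
  have c_antisymm (i j : ι) : c i j = -c j i := by
    simp only [hc, inner_smul_right, Complex.I_mul_re]
    rw [← inner_conj_symm, Complex.conj_im]
  have sum_column (j : ι) : ∑ i, c i j • b i = Complex.I • b j :=
    sum_re_inner_smul_map_single L _
  have sum_row (i : ι) : ∑ j, c i j • b j = -(Complex.I • b i) := by
    rw [← sum_column, ← Finset.sum_neg_distrib]
    exact Finset.sum_congr rfl fun j _ => by rw [c_antisymm, neg_smul]
  have key : Complex.I * ∑ i, B (b i) (b i) = -(Complex.I * ∑ i, B (b i) (b i)) := calc
    Complex.I * ∑ i, B (b i) (b i) = ∑ j, B (∑ i, c i j • b i) (b j) := by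
      simp [sum_column, Finset.mul_sum]
    _ = ∑ i, B (b i) (∑ j, c i j • b j) := by
      simp only [map_sum, sum_apply, ContinuousLinearMap.map_smul_of_tower, smul_apply]
      exact Finset.sum_comm
    _ = -(Complex.I * ∑ i, B (b i) (b i)) := by
      simp [sum_row, Finset.mul_sum]
  simpa [self_eq_neg] using key

variable {f : V → ℂ}

lemma pd_re_comp {x : EuclideanSpace ℝ ι} (hf : DifferentiableAt ℂ f (L x)) (i : ι) :
    pd (fun y => (f (L y)).re) x i = (fderiv ℂ f (L x) (L (EuclideanSpace.single i 1))).re :=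
  fderiv_re_comp (L : EuclideanSpace ℝ ι →L[ℝ] V) hf _

lemma fderiv_pd_re_comp (hf : ContDiff ℂ 2 f) (x v : EuclideanSpace ℝ ι) (i : ι) :
    fderiv ℝ (fun y => pd (fun y => (f (L y)).re) y i) x v =
      (fderiv ℂ (fderiv ℂ f) (L x) (L v) (L (EuclideanSpace.single i 1))).re := by
  have hf' : DifferentiableAt ℂ (fderiv ℂ f) (L x) := differentiable_fderiv_of_contDiff_two hf _
  simp only [pd_re_comp L (hf.differentiable two_ne_zero _)]
  rw [← fderiv_clm_apply_const hf']
  exact fderiv_re_comp (L : EuclideanSpace ℝ ι →L[ℝ] V)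
    (hf'.clm_apply (differentiableAt_const _)) v

lemma lap_re_comp (hf : ContDiff ℂ 2 f) (x : EuclideanSpace ℝ ι) :
    lap (fun y => (f (L y)).re) x = 0 := by
  simp only [lap, fderiv_pd_re_comp L hf, ← Complex.re_sum]
  rw [sum_bilin_map_single_self_eq_zero, Complex.zero_re]

variable [CompleteSpace V]

lemma sum_pd_re_comp_smul {x : EuclideanSpace ℝ ι} (hf : DifferentiableAt ℂ f (L x)) :
    ∑ i, pd (fun y => (f (L y)).re) x i • L (EuclideanSpace.single i 1) = ∇ f (L x) := by
  conv_rhs => rw [← sum_re_inner_smul_map_single L (∇ f (L x))]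
  simp only [pd_re_comp L hf, inner_gradient_right, Complex.conj_re]

lemma infLap_re_comp (hf : ContDiff ℂ 2 f) (x : EuclideanSpace ℝ ι) :
    infLap (fun y => (f (L y)).re) x =
      (fderiv ℂ (fderiv ℂ f) (L x) (∇ f (L x)) (∇ f (L x))).re := by
  simp only [infLap, fderiv_pd_re_comp L hf]
  rw [← sum_pd_re_comp_smul L (hf.differentiable two_ne_zero _)]
  simp only [map_sum, sum_apply, ContinuousLinearMap.map_smul_of_tower, smul_apply, Complex.re_sum,
    Complex.smul_re, smul_eq_mul]
  exact Finset.sum_congr rfl fun i _ => Finset.sum_congr rfl fun j _ => by ring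

end RealPart

lemma fderiv_gradient_self [CompleteSpace V] (f : V → ℂ) (z : V) :
    fderiv ℂ f z (∇ f z) = (‖∇ f z‖ : ℂ) ^ 2 := by
  rw [← inner_gradient_left, inner_self_eq_norm_sq_to_K, RCLike.ofReal_eq_complex_ofReal]

/-- Holomorphic functions whose Hessian, evaluated twice on the Hermitian gradient, is a real
multiple of `conj f`: by `infLap_re_comp`, `Δ_∞ (Re f)` is then a multiple of `Re f`. As `inner` is
conjugate-linear on the left, `∇ f` has the coordinates `conj (∂f/∂zₖ)`. -/
structure IsInfLapEigen [CompleteSpace V] (f : V → ℂ) : Prop where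
  contDiff : ContDiff ℂ 2 f
  exists_real_mul_conj (z : V) :
    ∃ r : ℝ, fderiv ℂ (fderiv ℂ f) z (∇ f z) (∇ f z) = r * conj (f z)

theorem IsInfLapEigen.gradSq_mul_lap_sub_infLap_eq_zero [CompleteSpace V] {f : V → ℂ}
    (hf : IsInfLapEigen f) (L : EuclideanSpace ℝ ι ≃ₗᵢ[ℝ] V) {x : EuclideanSpace ℝ ι}
    (hx : (f (L x)).re = 0) :
    gradSq (fun y => (f (L y)).re) x * lap (fun y => (f (L y)).re) x
      - infLap (fun y => (f (L y)).re) x = 0 := by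
  obtain ⟨r, hr⟩ := hf.exists_real_mul_conj (L x)
  rw [lap_re_comp L hf.contDiff, infLap_re_comp L hf.contDiff, hr, Complex.re_ofReal_mul,
    Complex.conj_re, hx, mul_zero, mul_zero, sub_zero]

lemma isInfLapEigen_clm [CompleteSpace V] (l : V →L[ℂ] ℂ) : IsInfLapEigen l where
  contDiff := l.contDiff
  exists_real_mul_conj z := ⟨0, by
    have h : fderiv ℂ l = fun _ => l := funext fun _ => l.fderiv
    simp [h]⟩

variable {κ : Type*} [Fintype κ]

/-- The quadratic form `∑ zₖ²` on `ℂ^κ`. -/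
def sumSq (z : EuclideanSpace ℂ κ) : ℂ := ∑ k, z k ^ 2

lemma fderiv_sumSq_apply (z v : EuclideanSpace ℂ κ) :
    fderiv ℂ sumSq z v = ∑ k, 2 * z k * v k := by
  have h : HasFDerivAt sumSq _ z := HasFDerivAt.fun_sum (u := Finset.univ) fun k _ =>
    ((EuclideanSpace.proj k : EuclideanSpace ℂ κ →L[ℂ] ℂ).hasFDerivAt (x := z)).pow 2
  simp [h.fderiv]

lemma contDiff_sumSq {m : WithTop ℕ∞} : ContDiff ℂ m (sumSq (κ := κ)) := by
  unfold sumSq; fun_prop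

lemma fderiv_fderiv_sumSq_apply (z v w : EuclideanSpace ℂ κ) :
    fderiv ℂ (fderiv ℂ sumSq) z v w = ∑ k, 2 * v k * w k := by
  rw [← fderiv_clm_apply_const (differentiable_fderiv_of_contDiff_two contDiff_sumSq z)]
  simp only [fderiv_sumSq_apply]
  have h : HasFDerivAt (fun y : EuclideanSpace ℂ κ => ∑ k, 2 * y k * w k) _ z :=
    HasFDerivAt.fun_sum fun k _ => (((EuclideanSpace.proj k :
      EuclideanSpace ℂ κ →L[ℂ] ℂ).hasFDerivAt (x := z)).const_mul 2).mul_const (w k)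
  rw [h.fderiv]
  simp [mul_comm]

lemma gradient_sumSq_apply (z : EuclideanSpace ℂ κ) (k : κ) :
    (∇ sumSq z) k = 2 * conj (z k) := by
  classical
  calc (∇ sumSq z) k = inner ℂ (EuclideanSpace.single k 1) (∇ sumSq z) := by
        rw [EuclideanSpace.inner_single_left, map_one, one_mul]
    _ = 2 * conj (z k) := by
        rw [inner_gradient_right]
        simp [fderiv_sumSq_apply, Complex.conj_ofNat]

lemma isInfLapEigen_sumSq : IsInfLapEigen (sumSq (κ := κ)) where
  contDiff := contDiff_sumSq
  exists_real_mul_conj z := ⟨8, by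
    simp only [fderiv_fderiv_sumSq_apply, gradient_sumSq_apply, sumSq, map_sum, map_pow,
      Finset.mul_sum]
    exact Finset.sum_congr rfl fun k _ => by push_cast; ring⟩

variable {W : Type*} [NormedAddCommGroup W] [InnerProductSpace ℂ W]

variable [CompleteSpace V] [CompleteSpace W] {f : V → ℂ} {g : W → ℂ}

lemma gradient_extMul (hf : Differentiable ℂ f) (hg : Differentiable ℂ g)
    (p : WithLp 2 (V × W)) :
    ∇ (extMul f g) p =
      WithLp.toLp 2 (conj (g p.snd) • ∇ f p.fst, conj (f p.fst) • ∇ g p.snd) := by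
  refine ext_inner_right ℂ fun v => ?_
  rw [inner_gradient_left, fderiv_extMul_apply hf hg]
  simp only [WithLp.prod_inner_apply, WithLp.ofLp_fst, WithLp.ofLp_snd, inner_smul_left,
    Complex.conj_conj, inner_gradient_left]
  ring

protected lemma IsInfLapEigen.extMul (hf : IsInfLapEigen f) (hg : IsInfLapEigen g) :
    IsInfLapEigen (extMul f g) where
  contDiff := contDiff_extMul hf.contDiff hg.contDiff
  exists_real_mul_conj p := by
    obtain ⟨r, hr⟩ := hf.exists_real_mul_conj p.fst
    obtain ⟨s, hs⟩ := hg.exists_real_mul_conj p.snd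
    have hf₁ := hf.contDiff.differentiable two_ne_zero
    have hg₁ := hg.contDiff.differentiable two_ne_zero
    refine ⟨‖g p.snd‖ ^ 2 * r + 2 * (‖∇ f p.fst‖ ^ 2 * ‖∇ g p.snd‖ ^ 2) + ‖f p.fst‖ ^ 2 * s, ?_⟩
    rw [fderiv_fderiv_extMul_self hf.contDiff hg.contDiff, gradient_extMul hf₁ hg₁]
    simp only [WithLp.toLp_fst, WithLp.toLp_snd, map_smul, smul_apply, smul_eq_mul, hr, hs,
      fderiv_gradient_self, extMul, map_mul]
    push_cast
    simp only [← Complex.mul_conj']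
    ring

end Holomorphic

section QuinticCone

variable (n : ℕ)

/-- The complex Hilbert space `ℂ × ℂⁿ × ℂⁿ ≅ ℝ^{4n+2}`, with the `L²` norm on both products. -/
abbrev QuinticSpace : Type :=
  WithLp 2 (ℂ × WithLp 2 (EuclideanSpace ℂ (Fin n) × EuclideanSpace ℂ (Fin n)))

lemma sum_fin_two_mul_add_one {M : Type*} [AddCommMonoid M] (g : Fin (2 * n + 1) → M) :
    ∑ i, g i = ∑ j : Fin n, g ⟨j, by omega⟩ + ∑ j : Fin n, g ⟨n + j, by omega⟩
      + g (Fin.last (2 * n)) := by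
  rw [Fin.sum_univ_castSucc, ← Equiv.sum_comp (finCongr (two_mul n).symm), Fin.sum_univ_add]
  rfl

lemma norm_sq_toLp_mk {κ : Type*} [Fintype κ] (x y : κ → ℝ) :
    ‖(WithLp.toLp 2 fun k => (⟨x k, y k⟩ : ℂ) : EuclideanSpace ℂ κ)‖ ^ 2 =
      ∑ k, x k ^ 2 + ∑ k, y k ^ 2 := by
  simp only [EuclideanSpace.norm_sq_eq, Complex.sq_norm, Complex.normSq_mk, ← sq,
    Finset.sum_add_distrib]

lemma sumSq_toLp_mk {κ : Type*} [Fintype κ] (x y : κ → ℝ) :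
    sumSq (WithLp.toLp 2 fun k => (⟨x k, y k⟩ : ℂ)) =
      ⟨∑ k, (x k ^ 2 - y k ^ 2), ∑ k, 2 * x k * y k⟩ := by
  simp only [sumSq, Complex.ext_iff, Complex.re_sum, Complex.im_sum, sq, Complex.mul_re,
    Complex.mul_im, true_and]
  exact Finset.sum_congr rfl fun k _ => by ring

/-- The identification `ℝ^{4n+2} ≅ ℂ × ℂⁿ × ℂⁿ` under which `P` is the real part of
`w · ∑ uⱼ² · ∑ vⱼ²`. The last pair is read as `w = y_{2n+1} + i x_{2n+1}`, in this order; the other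
pairs as `xⱼ + i yⱼ`. -/
def quinticCoords (z : EuclideanSpace ℝ (Fin (2 * n + 1) ⊕ Fin (2 * n + 1))) : QuinticSpace n :=
  WithLp.toLp 2 (⟨z (Sum.inr (Fin.last (2 * n))), z (Sum.inl (Fin.last (2 * n)))⟩,
    WithLp.toLp 2 (
      WithLp.toLp 2 fun j => ⟨z (Sum.inl ⟨j, by omega⟩), z (Sum.inr ⟨j, by omega⟩)⟩,
      WithLp.toLp 2 fun j => ⟨z (Sum.inl ⟨n + j, by omega⟩), z (Sum.inr ⟨n + j, by omega⟩)⟩))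

lemma quinticCoords_smul (c : ℝ) (z : EuclideanSpace ℝ (Fin (2 * n + 1) ⊕ Fin (2 * n + 1))) :
    quinticCoords n (c • z) = c • quinticCoords n z := by
  refine WithLp.ofLp_injective 2 (Prod.ext ?_ (WithLp.ofLp_injective 2 (Prod.ext ?_ ?_)))
  · simp [quinticCoords, Complex.ext_iff]
  all_goals ext j; simp [quinticCoords, Complex.ext_iff]

lemma norm_quinticCoords (z : EuclideanSpace ℝ (Fin (2 * n + 1) ⊕ Fin (2 * n + 1))) :
    ‖quinticCoords n z‖ = ‖z‖ := by
  rw [← sq_eq_sq₀ (norm_nonneg _) (norm_nonneg _)]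
  simp only [quinticCoords, WithLp.prod_norm_sq_eq_of_L2, WithLp.toLp_fst, WithLp.toLp_snd,
    norm_sq_toLp_mk, Complex.sq_norm, Complex.normSq_mk]
  simp only [EuclideanSpace.norm_sq_eq, Fintype.sum_sum_type, sum_fin_two_mul_add_one,
    Real.norm_eq_abs, sq_abs]
  ring

lemma finrank_quinticSpace : Module.finrank ℝ (QuinticSpace n) = 4 * n + 2 := by
  simp only [finrank_real_of_complex, (WithLp.linearEquiv 2 ℂ _).finrank_eq,
    Module.finrank_prod, Module.finrank_self, Module.finrank_fintype_fun_eq_card, Fintype.card_fin]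
  ring

/-- `quinticCoords` as an isometry of real Hilbert spaces. -/
def quinticIsometryEquiv :
    EuclideanSpace ℝ (Fin (2 * n + 1) ⊕ Fin (2 * n + 1)) ≃ₗᵢ[ℝ] QuinticSpace n :=
  LinearIsometry.toLinearIsometryEquiv
    { toFun := quinticCoords n
      map_add' := fun _ _ => rfl
      map_smul' := quinticCoords_smul n
      norm_map' := norm_quinticCoords n }
    (by rw [finrank_quinticSpace, finrank_euclideanSpace, Fintype.card_sum, Fintype.card_fin]; ring)

/-- The holomorphic potential `w · ∑ uⱼ² · ∑ vⱼ²` on `ℂ × ℂⁿ × ℂⁿ`. -/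
def quinticPotential : QuinticSpace n → ℂ :=
  extMul (ContinuousLinearMap.id ℂ ℂ) (extMul sumSq sumSq)

lemma isInfLapEigen_quinticPotential : IsInfLapEigen (quinticPotential n) :=
  (isInfLapEigen_clm _).extMul (isInfLapEigen_sumSq.extMul isInfLapEigen_sumSq)

lemma quinticP_eq_re_quinticPotential :
    QuinticP n = fun z => (quinticPotential n (quinticIsometryEquiv n z)).re := by
  funext z
  change _ = (extMul _ (extMul sumSq sumSq) (quinticCoords n z)).re
  simp only [QuinticP, T1, T2, S1, S2, quinticCoords, extMul, WithLp.toLp_fst, WithLp.toLp_snd,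
    sumSq_toLp_mk, ContinuousLinearMap.id_apply, Complex.mul_re, Complex.mul_im]
  ring

end QuinticCone

/-- the quintic `P = y_{2n+1}·(T₁S₁ − T₂S₂) − x_{2n+1}·(T₂S₁ + T₁S₂)`
satisfies `‖∇P‖²·ΔP − Δ_∞P = 0` at every point of `{P = 0}` with `∇P ≠ 0`; hence
`{y_{2n+1}(T₁S₁ − T₂S₂) = x_{2n+1}(T₂S₁ + T₁S₂)}` is a minimal quintic cone in `ℝ^{4n+2}`. -/
theorem quintic_cone_minimal_4n2 (n : ℕ) (hn : 1 ≤ n)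
    (z : EuclideanSpace ℝ (Fin (2 * n + 1) ⊕ Fin (2 * n + 1)))
    (hz : QuinticP n z = 0) (hgrad : ∃ i, pd (QuinticP n) z i ≠ 0) :
    gradSq (QuinticP n) z * lap (QuinticP n) z - infLap (QuinticP n) z = 0 := by
  rw [quinticP_eq_re_quinticPotential] at hz ⊢
  exact (isInfLapEigen_quinticPotential n).gradSq_mul_lap_sub_infLap_eq_zero
    (quinticIsometryEquiv n) hz
end
end

section
/- Lawson's algebraic minimal cones in ℝ^{2n}: let n ≥ 2 and let k₁,…,k_n be positive integers. The homogeneous polynomial P(x₁,y₁,…,x_n,y_n) = Im((x₁ + i·y₁)^{k₁} ⋯ (x_n + i·y_n)^{k_n}) of degree k₁+⋯+k_n satisfies ‖∇P‖²·ΔP − Δ_∞P = 0 at every point of {P = 0} where ∇P ≠ 0; hence {P = 0} is an algebraic minimal cone in ℝ^{2n}. In particular, for n = 3 and k₁ = k₂ = k₃ = 1, the cubic cone {y₁x₂x₃ + x₁y₂x₃ + x₁x₂y₃ − y₁y₂y₃ = 0} is minimal in ℝ⁶. -/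
/-!
Write `P = Im f` with `f` a monomial in the complex coordinates `wⱼ = xⱼ + i yⱼ`, and let
subscripts on `f` denote complex derivatives. By the Cauchy–Riemann equations `ΔP = 0`, and `∇P`
is `i · conj (fⱼ)ⱼ`, so `Δ_∞P = -∑ᵢ ∑ⱼ Im (fᵢⱼ · conj (fᵢ fⱼ))`. Euler's relations `wⱼ fⱼ = mⱼ f`
and `wⱼ fᵢⱼ = (mⱼ - δᵢⱼ) fᵢ` give `(mⱼ - δᵢⱼ) fᵢ fⱼ = mⱼ f fᵢⱼ`. Hence each `fᵢⱼ · conj (fᵢ fⱼ)`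
is a real multiple of `|fᵢⱼ|² · conj f`, and `Δ_∞P` is a real multiple of `P` at every point.
-/

noncomputable section

variable {ι : Type*} [Fintype ι] [DecidableEq ι]

/-- `P = Im((x₁ + i·y₁)^{k₁} ⋯ (x_n + i·y_n)^{k_n})` on `ℝ^{2n}`, with `xⱼ = z (inl j)`,
`yⱼ = z (inr j)`. -/
def LawsonP (n : ℕ) (k : Fin n → ℕ) (z : EuclideanSpace ℝ (Fin n ⊕ Fin n)) : ℝ :=
  (∏ j : Fin n, ((z (Sum.inl j) : ℂ) + (z (Sum.inr j) : ℂ) * Complex.I) ^ (k j)).im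

open MvPolynomial ComplexConjugate

section Monomial

variable {σ R : Type*} [CommSemiring R]

/-- The subtraction is truncated, harmlessly: if `m i = 0` then both sides vanish. -/
lemma X_mul_pderiv_pderiv_monomial (m : σ →₀ ℕ) (a : R) (i j : σ) :
    X j * pderiv j (pderiv i (monomial m a)) =
      (m - .single i 1 : σ →₀ ℕ) j • pderiv i (monomial m a) := by
  rw [pderiv_monomial, X_mul_pderiv_monomial]

lemma pderiv_pderiv_monomial_eq_zero {m : σ →₀ ℕ} {i j : σ}
    (h : (m - .single i 1 : σ →₀ ℕ) j = 0) (a : R) :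
    pderiv j (pderiv i (monomial m a)) = 0 := by
  rw [pderiv_monomial, pderiv_monomial, h, Nat.cast_zero, mul_zero, map_zero]

lemma nsmul_pderiv_mul_pderiv_monomial (m : σ →₀ ℕ) (a : R) (i j : σ) :
    (m - .single i 1 : σ →₀ ℕ) j • (pderiv i (monomial m a) * pderiv j (monomial m a)) =
      m j • (monomial m a * pderiv j (pderiv i (monomial m a))) := by
  rw [← X_mul_cancel_left_iff (i := j)]
  set f := monomial m a
  calc X j * ((m - .single i 1 : σ →₀ ℕ) j • (pderiv i f * pderiv j f))
      = ((m - .single i 1 : σ →₀ ℕ) j • pderiv i f) * (X j * pderiv j f) := by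
        simp only [nsmul_eq_mul]; ring
    _ = (X j * pderiv j (pderiv i f)) * (m j • f) := by
        rw [X_mul_pderiv_pderiv_monomial, X_mul_pderiv_monomial]
    _ = X j * (m j • (f * pderiv j (pderiv i f))) := by
        simp only [nsmul_eq_mul]; ring

lemma exists_eval_pderiv_pderiv_mul_conj_monomial (m : σ →₀ ℕ) (a : ℂ) (w : σ → ℂ) (i j : σ) :
    ∃ r : ℝ, eval w (pderiv j (pderiv i (monomial m a))) *
        conj (eval w (pderiv i (monomial m a)) * eval w (pderiv j (monomial m a))) =
      r * conj (eval w (monomial m a)) := by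
  rcases eq_or_ne ((m - .single i 1 : σ →₀ ℕ) j) 0 with hb | hb
  · refine ⟨0, ?_⟩
    rw [pderiv_pderiv_monomial_eq_zero hb, map_zero, zero_mul, Complex.ofReal_zero, zero_mul]
  set b := (m - .single i 1 : σ →₀ ℕ) j
  set f := monomial m a
  set h := eval w (pderiv j (pderiv i f))
  have pderiv_mul_pderiv :
      eval w (pderiv i f) * eval w (pderiv j f) = m j * (eval w f * h) / b := by
    rw [eq_div_iff (Nat.cast_ne_zero.mpr hb), mul_comm]
    simpa only [nsmul_eq_mul, map_mul, map_natCast]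
      using congrArg (eval w) (nsmul_pderiv_mul_pderiv_monomial m a i j)
  refine ⟨m j / b * Complex.normSq h, ?_⟩
  rw [pderiv_mul_pderiv]
  simp only [map_mul, map_div₀, map_natCast, Complex.ofReal_mul, Complex.ofReal_div,
    Complex.ofReal_natCast, ← Complex.mul_conj]
  ring

end Monomial

lemma hasFDerivAt_eval_mvPolynomial {σ 𝕜 : Type*} [Fintype σ] [NontriviallyNormedField 𝕜]
    (p : MvPolynomial σ 𝕜) (w : σ → 𝕜) :
    HasFDerivAt (fun w => eval w p)
      (∑ j, eval w (pderiv j p) • (ContinuousLinearMap.proj j : (σ → 𝕜) →L[𝕜] 𝕜)) w := by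
  classical
  induction p using MvPolynomial.induction_on with
  | C a =>
    simp only [eval_C]
    refine (hasFDerivAt_const a w).congr_fderiv ?_
    ext v
    simp
  | add p q hp hq =>
    simp only [map_add]
    refine (hp.fun_add hq).congr_fderiv ?_
    ext v
    simp [add_mul, Finset.sum_add_distrib]
  | mul_X p i hp =>
    simp only [map_mul, eval_X]
    refine (hp.mul (hasFDerivAt_apply i w)).congr_fderiv ?_
    ext v
    simp [Pi.single_apply, Finset.sum_add_distrib, Finset.mul_sum, add_mul, mul_assoc, apply_ite]

section ImEval

variable {σ : Type*}

/-- The identification `(x, y) ↦ x + i y` of `ℝ^{2n}` with `ℂⁿ`, as a real-linear map. It reduces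
real partial derivatives of `imEval p` to formal derivatives of `p`. -/
def complexCoord : EuclideanSpace ℝ (σ ⊕ σ) →L[ℝ] (σ → ℂ) :=
  .pi fun j => Complex.ofRealCLM ∘L EuclideanSpace.proj (Sum.inl j) +
    Complex.I • Complex.ofRealCLM ∘L EuclideanSpace.proj (Sum.inr j)

lemma complexCoord_apply (z : EuclideanSpace ℝ (σ ⊕ σ)) (j : σ) :
    complexCoord z j = z (Sum.inl j) + z (Sum.inr j) * Complex.I := by
  simp [complexCoord, mul_comm]

/-- The imaginary part of a complex polynomial in the variables `xⱼ + i yⱼ`, as a function of the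
real coordinates; Lawson's `P` is the case of a monomial. -/
def imEval (p : MvPolynomial σ ℂ) (z : EuclideanSpace ℝ (σ ⊕ σ)) : ℝ :=
  (eval (complexCoord z) p).im

lemma fderiv_imEval [Fintype σ] (p : MvPolynomial σ ℂ) (z v : EuclideanSpace ℝ (σ ⊕ σ)) :
    fderiv ℝ (imEval p) z v =
      (∑ j, eval (complexCoord z) (pderiv j p) * complexCoord v j).im := by
  have h : HasFDerivAt (imEval p) _ z := Complex.imCLM.hasFDerivAt.comp z <|
    ((hasFDerivAt_eval_mvPolynomial p (complexCoord z)).restrictScalars ℝ).comp z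
      complexCoord.hasFDerivAt
  rw [h.fderiv]
  simp

variable [DecidableEq σ]

lemma complexCoord_single_inl (j : σ) (c : ℝ) :
    complexCoord (EuclideanSpace.single (Sum.inl j) c) = Pi.single j (c : ℂ) := by
  ext l
  by_cases h : l = j <;> simp [complexCoord_apply, h]

lemma complexCoord_single_inr (j : σ) (c : ℝ) :
    complexCoord (EuclideanSpace.single (Sum.inr j) c) = Pi.single j (c * Complex.I) := by
  ext l
  by_cases h : l = j <;> simp [complexCoord_apply, h]

lemma pd_imEval_inl [Finite σ] (p : MvPolynomial σ ℂ) (z : EuclideanSpace ℝ (σ ⊕ σ)) (j : σ) :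
    pd (imEval p) z (Sum.inl j) = imEval (pderiv j p) z := by
  cases nonempty_fintype σ
  simp [pd, fderiv_imEval, complexCoord_single_inl, imEval, Pi.single_apply]

lemma pd_imEval_inr [Finite σ] (p : MvPolynomial σ ℂ) (z : EuclideanSpace ℝ (σ ⊕ σ)) (j : σ) :
    pd (imEval p) z (Sum.inr j) = imEval (C Complex.I * pderiv j p) z := by
  cases nonempty_fintype σ
  simp [pd, fderiv_imEval, complexCoord_single_inr, imEval, Pi.single_apply]

variable [Fintype σ]

lemma lap_imEval (p : MvPolynomial σ ℂ) (z : EuclideanSpace ℝ (σ ⊕ σ)) :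
    lap (imEval p) z = 0 := by
  change ∑ i, pd (fun y => pd (imEval p) y i) z i = 0
  simp only [Fintype.sum_sum_type, pd_imEval_inl, pd_imEval_inr, pderiv_C_mul]
  simp [imEval]

lemma infLap_imEval (p : MvPolynomial σ ℂ) (z : EuclideanSpace ℝ (σ ⊕ σ)) :
    infLap (imEval p) z = -∑ i, ∑ j, (eval (complexCoord z) (pderiv j (pderiv i p)) *
      conj (eval (complexCoord z) (pderiv i p) * eval (complexCoord z) (pderiv j p))).im := by
  change ∑ i, ∑ j, pd (imEval p) z i * pd (imEval p) z j *
    pd (fun y => pd (imEval p) y i) z j = _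
  simp only [Fintype.sum_sum_type, ← Finset.sum_add_distrib, ← Finset.sum_neg_distrib,
    pd_imEval_inl, pd_imEval_inr, pderiv_C_mul]
  refine Finset.sum_congr rfl fun i _ => Finset.sum_congr rfl fun j _ => ?_
  simp [imEval]
  ring

theorem exists_infLap_imEval_monomial_eq_mul (m : σ →₀ ℕ) (a : ℂ)
    (z : EuclideanSpace ℝ (σ ⊕ σ)) :
    ∃ r : ℝ, infLap (imEval (monomial m a)) z = r * imEval (monomial m a) z := by
  choose r hr using exists_eval_pderiv_pderiv_mul_conj_monomial m a (complexCoord z)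
  refine ⟨∑ i, ∑ j, r i j, ?_⟩
  simp only [infLap_imEval, hr, Complex.im_ofReal_mul, Complex.conj_im, mul_neg,
    Finset.sum_neg_distrib, neg_neg, Finset.sum_mul, imEval]

theorem lawson_cones_R2n_minimal_general (m : σ →₀ ℕ) (a : ℂ) (z : EuclideanSpace ℝ (σ ⊕ σ))
    (hz : imEval (monomial m a) z = 0) :
    gradSq (imEval (monomial m a)) z * lap (imEval (monomial m a)) z -
      infLap (imEval (monomial m a)) z = 0 := by
  obtain ⟨r, hr⟩ := exists_infLap_imEval_monomial_eq_mul m a z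
  rw [hr, hz, lap_imEval, mul_zero, mul_zero, sub_zero]

end ImEval

lemma lawsonP_eq_imEval_monomial (n : ℕ) (k : Fin n → ℕ) :
    LawsonP n k = imEval (monomial (Finsupp.equivFunOnFinite.symm k) 1) := by
  funext z
  simp [LawsonP, imEval, eval_monomial, Finsupp.prod_fintype, complexCoord_apply]

lemma lawsonP_three_one :
    LawsonP 3 (fun _ => 1) = fun w =>
      w (Sum.inr 0) * w (Sum.inl 1) * w (Sum.inl 2) +
        w (Sum.inl 0) * w (Sum.inr 1) * w (Sum.inl 2) +
        w (Sum.inl 0) * w (Sum.inl 1) * w (Sum.inr 2) -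
        w (Sum.inr 0) * w (Sum.inr 1) * w (Sum.inr 2) := by
  funext w
  simp [LawsonP, Fin.prod_univ_three]
  ring

/-- Lawson's algebraic minimal cones in `ℝ^{2n}`: for `n ≥ 2` and positive
integers `k₁,…,k_n`, the degree-`(k₁+⋯+k_n)` polynomial
`P = Im((x₁+iy₁)^{k₁} ⋯ (x_n+iy_n)^{k_n})` satisfies `‖∇P‖²·ΔP − Δ_∞P = 0` at every point
of `{P = 0}` with `∇P ≠ 0`, so `{P = 0}` is an algebraic minimal cone; in particular for
`n = 3`, `k₁ = k₂ = k₃ = 1` the cubic cone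
`{y₁x₂x₃ + x₁y₂x₃ + x₁x₂y₃ − y₁y₂y₃ = 0}` is minimal in `ℝ⁶`. -/
theorem lawson_cones_R2n_minimal :
    (∀ (n : ℕ), 2 ≤ n → ∀ k : Fin n → ℕ, (∀ j, 0 < k j) →
      ∀ z : EuclideanSpace ℝ (Fin n ⊕ Fin n), LawsonP n k z = 0 →
        (∃ i, pd (LawsonP n k) z i ≠ 0) →
        gradSq (LawsonP n k) z * lap (LawsonP n k) z - infLap (LawsonP n k) z = 0) ∧
    (∀ z : EuclideanSpace ℝ (Fin 3 ⊕ Fin 3),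
      z (Sum.inr 0) * z (Sum.inl 1) * z (Sum.inl 2) +
          z (Sum.inl 0) * z (Sum.inr 1) * z (Sum.inl 2) +
          z (Sum.inl 0) * z (Sum.inl 1) * z (Sum.inr 2) -
          z (Sum.inr 0) * z (Sum.inr 1) * z (Sum.inr 2) = 0 →
      (∃ i, pd (fun w : EuclideanSpace ℝ (Fin 3 ⊕ Fin 3) =>
          w (Sum.inr 0) * w (Sum.inl 1) * w (Sum.inl 2) +
            w (Sum.inl 0) * w (Sum.inr 1) * w (Sum.inl 2) +
            w (Sum.inl 0) * w (Sum.inl 1) * w (Sum.inr 2) -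
            w (Sum.inr 0) * w (Sum.inr 1) * w (Sum.inr 2)) z i ≠ 0) →
      gradSq (fun w : EuclideanSpace ℝ (Fin 3 ⊕ Fin 3) =>
          w (Sum.inr 0) * w (Sum.inl 1) * w (Sum.inl 2) +
            w (Sum.inl 0) * w (Sum.inr 1) * w (Sum.inl 2) +
            w (Sum.inl 0) * w (Sum.inl 1) * w (Sum.inr 2) -
            w (Sum.inr 0) * w (Sum.inr 1) * w (Sum.inr 2)) z *
        lap (fun w : EuclideanSpace ℝ (Fin 3 ⊕ Fin 3) =>
          w (Sum.inr 0) * w (Sum.inl 1) * w (Sum.inl 2) +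
            w (Sum.inl 0) * w (Sum.inr 1) * w (Sum.inl 2) +
            w (Sum.inl 0) * w (Sum.inl 1) * w (Sum.inr 2) -
            w (Sum.inr 0) * w (Sum.inr 1) * w (Sum.inr 2)) z -
        infLap (fun w : EuclideanSpace ℝ (Fin 3 ⊕ Fin 3) =>
          w (Sum.inr 0) * w (Sum.inl 1) * w (Sum.inl 2) +
            w (Sum.inl 0) * w (Sum.inr 1) * w (Sum.inl 2) +
            w (Sum.inl 0) * w (Sum.inl 1) * w (Sum.inr 2) -
            w (Sum.inr 0) * w (Sum.inr 1) * w (Sum.inr 2)) z = 0) := by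
  refine ⟨fun n _ k _ z hz _ => ?_, fun z hz _ => ?_⟩
  · rw [lawsonP_eq_imEval_monomial] at hz ⊢
    exact lawson_cones_R2n_minimal_general _ _ z hz
  · rw [← lawsonP_three_one, lawsonP_eq_imEval_monomial]
    apply lawson_cones_R2n_minimal_general
    rwa [← lawsonP_eq_imEval_monomial, lawsonP_three_one]
end
end
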